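/- arXiv:0805.1996 — 2 statements merged into one kernel-verified Lean document; each statement's English description precedes it below -/
import Mathlib

section
/- Let n ≥ 2, let 0 < α ≤ ∞, and let f : (0,α) → ℝ be twice continuously differentiable and matrix convex of order n on (0,α). Fix s ∈ (0,α) and define h_s : (0,α) → ℝ by h_s(t) = (f(t) − f(s))/(t − s) for t ≠ s and h_s(s) = f'(s). Then h_s is matrix monotone of order n−1 on (0,α). -/
/-!
Newton's identity `f(Y) = f(c) + (Y - c) [·, c]_f(Y)`, applied with `c = d i` in the `i`-th row and
then to the columns of `[·, d i]_f(Y)`, expands `f(D + H)` exactly to second order at a diagonal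
matrix `D = diag(d)`. Midpoint convexity of `f` at `D ± εH` cancels the first-order terms, and
letting `ε → 0` shows that `∑ k, H i k * [d i, d j, d k]_f * H k j` is positive semidefinite.
Take `d = (s, x)`, one point more than the order of monotonicity, and let `H` be supported on the
first row and column: the block indexed by `x` is the matrix of `[x i, x j, s]_f`, which is the
Loewner matrix of `h_s` at `x`. So all Loewner matrices of `h_s` are positive semidefinite.
Along the segment from `A` to `B` the derivative of `h_s` is, in an eigenbasis, the Hadamard product
of such a Loewner matrix with `B - A` (Daleckii–Krein), hence positive semidefinite by the Schur
product theorem, and `h_s(A) ≤ h_s(B)`.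
-/

open Matrix Set MeasureTheory
open scoped ComplexOrder

/-- `f` is matrix monotone of order `n` on the set `I ⊆ ℝ`: for all `n × n` Hermitian complex
matrices `A, B` with spectra contained in `I`, `A ≤ B` in the Loewner order (i.e. `B - A` is
positive semidefinite) implies `f(A) ≤ f(B)`, where `f(A)` is given by the continuous functional
calculus (applying `f` to the eigenvalues in a spectral decomposition). -/
def MatrixMonotoneOn (n : ℕ) (f : ℝ → ℝ) (I : Set ℝ) : Prop :=
  ∀ A B : Matrix (Fin n) (Fin n) ℂ, A.IsHermitian → B.IsHermitian →
    spectrum ℝ A ⊆ I → spectrum ℝ B ⊆ I → (B - A).PosSemidef →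
    (cfc f B - cfc f A).PosSemidef

/-- `f` is matrix convex of order `n` on the set `I ⊆ ℝ`: for all `n × n` Hermitian complex
matrices `A, B` with spectra contained in `I` and all `l ∈ [0,1]`,
`f(l•A + (1-l)•B) ≤ l•f(A) + (1-l)•f(B)` in the Loewner order. -/
def MatrixConvexOn (n : ℕ) (f : ℝ → ℝ) (I : Set ℝ) : Prop :=
  ∀ A B : Matrix (Fin n) (Fin n) ℂ, A.IsHermitian → B.IsHermitian →
    spectrum ℝ A ⊆ I → spectrum ℝ B ⊆ I → ∀ l : ℝ, 0 ≤ l → l ≤ 1 →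
    (l • cfc f A + (1 - l) • cfc f B - cfc f (l • A + (1 - l) • B)).PosSemidef

open Filter Topology

section DividedDifferences

lemma dslope_comm {𝕜 E : Type*} [NontriviallyNormedField 𝕜] [NormedAddCommGroup E]
    [NormedSpace 𝕜 E] (f : 𝕜 → E) (a b : 𝕜) : dslope f a b = dslope f b a := by
  rcases eq_or_ne b a with rfl | hba
  · rfl
  · rw [dslope_of_ne f hba, dslope_of_ne f hba.symm, slope_comm]

variable {f : ℝ → ℝ} {I : Set ℝ} {a b c : ℝ}

lemma tendsto_sub_linear_div_sq (hf : ∀ᶠ x in 𝓝 a, DifferentiableAt ℝ f x)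
    (hf' : DifferentiableAt ℝ (deriv f) a) :
    Tendsto (fun t => (f t - (f a + deriv f a * (t - a))) / (t - a) ^ 2) (𝓝[≠] a)
      (𝓝 (deriv (deriv f) a / 2)) := by
  have hnum : ∀ᶠ x in 𝓝 a,
      HasDerivAt (fun t => f t - (f a + deriv f a * (t - a))) (deriv f x - deriv f a) x := by
    filter_upwards [hf] with x hx
    simpa using hx.hasDerivAt.fun_sub
      ((((hasDerivAt_id' x).sub_const a).const_mul (deriv f a)).const_add (f a))
  have hden (x : ℝ) : HasDerivAt (fun t => (t - a) ^ 2) (2 * (x - a)) x := by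
    simpa using ((hasDerivAt_id' x).sub_const a).fun_pow 2
  refine HasDerivAt.lhopital_zero_nhdsNE (hnum.filter_mono nhdsWithin_le_nhds)
    (.of_forall hden) ?_ ?_ ?_ ?_
  · filter_upwards [self_mem_nhdsWithin] with x hx
    exact mul_ne_zero two_ne_zero (sub_ne_zero.2 hx)
  · simpa using hnum.self_of_nhds.continuousAt.tendsto.mono_left nhdsWithin_le_nhds
  · simpa using (hden a).continuousAt.tendsto.mono_left nhdsWithin_le_nhds
  · refine (hf'.hasDerivAt.tendsto_slope.div_const 2).congr fun x => ?_
    rw [slope_def_field, div_div, mul_comm]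

lemma hasDerivAt_dslope_self (hf : ∀ᶠ x in 𝓝 a, DifferentiableAt ℝ f x)
    (hf' : DifferentiableAt ℝ (deriv f) a) :
    HasDerivAt (dslope f a) (deriv (deriv f) a / 2) a := by
  refine hasDerivAt_iff_tendsto_slope.2 ((tendsto_sub_linear_div_sq hf hf').congr' ?_)
  filter_upwards [self_mem_nhdsWithin] with x hx
  have : x - a ≠ 0 := sub_ne_zero.2 hx
  rw [slope_def_field, dslope_same, dslope_of_ne f hx, slope_def_field]
  field_simp
  ring

lemma continuousOn_dslope_dslope (hI : IsOpen I) (hf : DifferentiableOn ℝ f I)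
    (hf' : DifferentiableOn ℝ (deriv f) I) (ha : a ∈ I) (hb : b ∈ I) :
    ContinuousOn (dslope (dslope f a) b) I := by
  have hfI {x : ℝ} (hx : x ∈ I) : DifferentiableAt ℝ f x := hf.differentiableAt (hI.mem_nhds hx)
  refine (continuousOn_dslope (hI.mem_nhds hb)).2
    ⟨(continuousOn_dslope (hI.mem_nhds ha)).2 ⟨hf.continuousOn, hfI ha⟩, ?_⟩
  rcases eq_or_ne b a with rfl | hba
  · exact (hasDerivAt_dslope_self ((hI.eventually_mem hb).mono fun _ => hfI)
      (hf'.differentiableAt (hI.mem_nhds hb))).differentiableAt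
  · exact (differentiableAt_dslope_of_ne hba).2 (hfI hb)

lemma dslope_dslope_swap_of_ne {𝕜 : Type*} [NontriviallyNormedField 𝕜] (f : 𝕜 → 𝕜) {a b c : 𝕜}
    (hab : a ≠ b) (hbc : b ≠ c) (hac : a ≠ c) :
    dslope (dslope f a) c b = dslope (dslope f c) a b := by
  rw [dslope_of_ne _ hbc, dslope_of_ne _ hab.symm]
  simp only [slope_def_field, dslope_of_ne _ hac, dslope_of_ne _ hac.symm, dslope_of_ne _ hbc,
    dslope_of_ne _ hab.symm]
  grind

lemma dslope_dslope_swap (hI : IsOpen I) (hf : DifferentiableOn ℝ f I)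
    (hf' : DifferentiableOn ℝ (deriv f) I) (ha : a ∈ I) (hb : b ∈ I) (hc : c ∈ I) :
    dslope (dslope f a) c b = dslope (dslope f c) a b := by
  rcases eq_or_ne a c with rfl | hac
  · rfl
  have hcont {p q : ℝ} (hp : p ∈ I) (hq : q ∈ I) : ContinuousAt (dslope (dslope f p) q) b :=
    (continuousOn_dslope_dslope hI hf hf' hp hq).continuousAt (hI.mem_nhds hb)
  have hne : ({a, c} : Set ℝ)ᶜ ∈ 𝓝[≠] b := nhdsNE_le_cofinite b (toFinite {a, c}).compl_mem_cofinite
  refine (((hcont ha hc).eventuallyEq_nhds_iff_eventuallyEq_nhdsNE (hcont hc ha)).1 ?_).eq_of_nhds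
  filter_upwards [hne] with x hx
  simp only [mem_compl_iff, mem_insert_iff, mem_singleton_iff, not_or] at hx
  exact dslope_dslope_swap_of_ne f (Ne.symm hx.1) hx.2 hac

lemma dslope_eq_ite (f : ℝ → ℝ) (a : ℝ) :
    dslope f a = fun t => if t = a then deriv f a else (f t - f a) / (t - a) := by
  funext t
  split_ifs with ht
  · rw [ht, dslope_same]
  · rw [dslope_of_ne f ht, slope_def_field]

end DividedDifferences

section ContinuousFunctionalCalculus

lemma cfc_eq_algebraMap_add_mul {R A : Type*} {p : A → Prop} [NontriviallyNormedField R]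
    [StarRing R] [IsTopologicalRing R] [ContinuousStar R] [TopologicalSpace A] [Ring A] [StarRing A]
    [Algebra R A] [ContinuousFunctionalCalculus R A p] (f : R → R) (c : R) (a : A)
    (hf : ContinuousOn (dslope f c) (spectrum R a) := by cfc_cont_tac) (ha : p a := by cfc_tac) :
    cfc f a = algebraMap R A (f c) + (a - algebraMap R A c) * cfc (dslope f c) a := by
  have hnewton : f = fun t => f c + (t - c) * dslope f c t := by
    funext t
    rw [← smul_eq_mul, sub_smul_dslope, add_sub_cancel]
  conv_lhs => rw [hnewton]
  rw [cfc_const_add (f c) _ a, cfc_mul _ _ a, cfc_sub _ _ a, cfc_id' R a, cfc_const c a]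

lemma eventually_spectrum_subset_of_tendsto {X 𝕜 A : Type*} [NontriviallyNormedField 𝕜]
    [ProperSpace 𝕜] [NormedRing A] [NormedAlgebra 𝕜 A] [CompleteSpace A] {l : Filter X} {a : X → A}
    {b : A} (ha : Tendsto a l (𝓝 b)) {S : Set 𝕜} (hS : S ∈ 𝓝ˢ (spectrum 𝕜 b)) :
    ∀ᶠ x in l, spectrum 𝕜 (a x) ⊆ S :=
  ha.eventually (((upperHemicontinuous_spectrum 𝕜 A).upperHemicontinuousAt b S hS).mono
    fun _ => subset_of_mem_nhdsSet)

lemma tendsto_cfc_of_isOpen {X 𝕜 A : Type*} {p : A → Prop} [RCLike 𝕜] [NormedRing A] [StarRing A]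
    [NormedAlgebra 𝕜 A] [IsometricContinuousFunctionalCalculus 𝕜 A p] [ContinuousStar A]
    [CompleteSpace A] {s : Set 𝕜} (hs : IsOpen s) {f : 𝕜 → 𝕜} (hf : ContinuousOn f s) {l : Filter X}
    {a : X → A} {b : A} (ha : Tendsto a l (𝓝 b)) (hpa : ∀ᶠ x in l, p (a x)) (hpb : p b)
    (hb : spectrum 𝕜 b ⊆ s) : Tendsto (fun x => cfc f (a x)) l (𝓝 (cfc f b)) := by
  obtain ⟨S, ⟨hS, hSc⟩, hSs⟩ :=
    (spectrum.isCompact (𝕜 := 𝕜) b).nhdsSet_basis_isCompact.mem_iff.mp (hs.mem_nhdsSet.2 hb)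
  exact ha.cfc hSc f (eventually_spectrum_subset_of_tendsto ha hS) hpa (subset_of_mem_nhdsSet hS)
    hpb (hf.mono hSs)

variable {A : Type*} [TopologicalSpace A] [Ring A] [StarRing A] [PartialOrder A] [StarOrderedRing A]
  [Algebra ℝ A] [ContinuousFunctionalCalculus ℝ A IsSelfAdjoint] [NonnegSpectrumClass ℝ A]

lemma exists_mem_spectrum_le_of_le {a b : A} (ha : IsSelfAdjoint a) (hb : IsSelfAdjoint b)
    (hab : a ≤ b) {μ : ℝ} (hμ : μ ∈ spectrum ℝ b) : ∃ r ∈ spectrum ℝ a, r ≤ μ := by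
  have : Nontrivial A := by
    by_contra htriv
    rw [not_nontrivial_iff_subsingleton] at htriv
    rw [spectrum.of_subsingleton] at hμ
    exact hμ
  obtain ⟨r, hr, hr_least⟩ :=
    (ContinuousFunctionalCalculus.isCompact_spectrum (R := ℝ) a).exists_isLeast
      (ContinuousFunctionalCalculus.spectrum_nonempty a ha)
  have hra : algebraMap ℝ A r ≤ a := (algebraMap_le_iff_le_spectrum ha).2 fun _ hx => hr_least hx
  exact ⟨r, hr, (algebraMap_le_iff_le_spectrum hb).1 (hra.trans hab) μ hμ⟩

lemma exists_mem_spectrum_ge_of_le {a b : A} (ha : IsSelfAdjoint a) (hb : IsSelfAdjoint b)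
    (hab : a ≤ b) {μ : ℝ} (hμ : μ ∈ spectrum ℝ a) : ∃ r ∈ spectrum ℝ b, μ ≤ r := by
  have hneg : -μ ∈ spectrum ℝ (-a) := by rwa [← spectrum.neg_eq, Set.neg_mem_neg]
  obtain ⟨r, hr, hrμ⟩ := exists_mem_spectrum_le_of_le hb.neg ha.neg (neg_le_neg hab) hneg
  exact ⟨-r, by rwa [← spectrum.neg_eq] at hr, le_neg_of_le_neg hrμ⟩

lemma spectrum_subset_of_mem_Icc {s : Set ℝ} (hs : s.OrdConnected) {a b c : A}
    (ha : IsSelfAdjoint a) (hb : IsSelfAdjoint b) (hc : IsSelfAdjoint c) (hcab : c ∈ Icc a b)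
    (has : spectrum ℝ a ⊆ s) (hbs : spectrum ℝ b ⊆ s) : spectrum ℝ c ⊆ s := by
  intro μ hμ
  obtain ⟨l, hl, hlμ⟩ := exists_mem_spectrum_le_of_le ha hc hcab.1 hμ
  obtain ⟨u, hu, hμu⟩ := exists_mem_spectrum_ge_of_le hc hb hcab.2 hμ
  exact hs.out (has hl) (hbs hu) ⟨hlμ, hμu⟩

end ContinuousFunctionalCalculus

section Diagonal

/-- The diagonal matrix with real diagonal entries `d`, viewed as a matrix over `𝕜`. -/
def realDiagonal (𝕜 : Type*) {ι : Type*} [RCLike 𝕜] [DecidableEq ι] (d : ι → ℝ) : Matrix ι ι 𝕜 :=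
  Matrix.diagonal fun i => (d i : 𝕜)

/-- The Loewner matrix of `f` at the points `d`: the matrix of first divided differences
`[d i, d j]_f`, viewed as a matrix over `𝕜`. -/
noncomputable def loewnerMatrix (𝕜 : Type*) {ι : Type*} [RCLike 𝕜] (f : ℝ → ℝ) (d : ι → ℝ) :
    Matrix ι ι 𝕜 :=
  .of fun i j => (dslope f (d i) (d j) : ℝ)

/-- The second-order term of the functional calculus at `realDiagonal 𝕜 d` in the direction `H`: its
`(i, j)` entry is the `(i, j)` entry of `H * [d i, d j, ·]_f(Y) * H`. For `Y = realDiagonal 𝕜 d + H`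
this is the exact remainder in the first-order expansion of `f`, and for `Y = realDiagonal 𝕜 d` it
is half the second derivative of `f`. -/
noncomputable def secondOrderTerm {𝕜 ι : Type*} [RCLike 𝕜] [Fintype ι] [DecidableEq ι]
    (f : ℝ → ℝ) (d : ι → ℝ) (H Y : Matrix ι ι 𝕜) : Matrix ι ι 𝕜 :=
  .of fun i j => (H * cfc (dslope (dslope f (d i)) (d j)) Y * H) i j

lemma isHermitian_realDiagonal {𝕜 ι : Type*} [RCLike 𝕜] [DecidableEq ι] (d : ι → ℝ) :
    (realDiagonal 𝕜 d).IsHermitian :=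
  isHermitian_diagonal_of_self_adjoint _ (funext fun _ => RCLike.conj_ofReal _)

variable {𝕜 ι : Type*} [RCLike 𝕜] [Fintype ι] [DecidableEq ι] {Y H : Matrix ι ι 𝕜}

lemma spectrum_realDiagonal (d : ι → ℝ) : spectrum ℝ (realDiagonal 𝕜 d) = range d := by
  rw [realDiagonal, ← spectrum.preimage_algebraMap 𝕜, spectrum_diagonal, range_comp']
  exact preimage_image_eq _ RCLike.ofReal_injective

lemma cfc_apply_eq_realDiagonal_add_sub_mul (hY : Y.IsHermitian) (f : ℝ → ℝ) (d : ι → ℝ)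
    (i j : ι) :
    cfc f Y i j = realDiagonal 𝕜 (f ∘ d) i j +
      ((Y - realDiagonal 𝕜 d) * cfc (dslope f (d i)) Y) i j := by
  rw [cfc_eq_algebraMap_add_mul f (d i) Y (Matrix.finite_real_spectrum.continuousOn _)
      hY.isSelfAdjoint, Matrix.add_apply, sub_mul, sub_mul, Matrix.sub_apply, Matrix.sub_apply,
    Matrix.algebraMap_eq_diagonal, Matrix.algebraMap_eq_diagonal, realDiagonal, realDiagonal,
    diagonal_mul, diagonal_mul, Matrix.diagonal_apply, Matrix.diagonal_apply]
  rfl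

lemma cfc_apply_eq_realDiagonal_add_mul_sub (hY : Y.IsHermitian) (f : ℝ → ℝ) (d : ι → ℝ)
    (i j : ι) :
    cfc f Y i j = realDiagonal 𝕜 (f ∘ d) i j +
      (cfc (dslope f (d j)) Y * (Y - realDiagonal 𝕜 d)) i j := by
  have hcfc (g : ℝ → ℝ) : (cfc g Y).IsHermitian := cfc_predicate (p := IsSelfAdjoint) g Y
  rw [← (hcfc f).apply i j, cfc_apply_eq_realDiagonal_add_sub_mul hY f d j i, star_add,
    (isHermitian_realDiagonal (f ∘ d)).apply i j, ← conjTranspose_apply,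
    conjTranspose_mul, (hcfc _).eq, (hY.sub (isHermitian_realDiagonal d)).eq]

lemma cfc_realDiagonal (f : ℝ → ℝ) (d : ι → ℝ) :
    cfc f (realDiagonal 𝕜 d) = realDiagonal 𝕜 (f ∘ d) := by
  ext i j
  rw [cfc_apply_eq_realDiagonal_add_sub_mul (isHermitian_realDiagonal d) f d i j, sub_self,
    zero_mul, Matrix.zero_apply, add_zero]

lemma cfc_realDiagonal_add (hH : H.IsHermitian) (f : ℝ → ℝ) (d : ι → ℝ) :
    cfc f (realDiagonal 𝕜 d + H) = realDiagonal 𝕜 (f ∘ d) + H ⊙ loewnerMatrix 𝕜 f d +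
      secondOrderTerm f d H (realDiagonal 𝕜 d + H) := by
  have hY := (isHermitian_realDiagonal (𝕜 := 𝕜) d).add hH
  ext i j
  have hcol (k : ι) := cfc_apply_eq_realDiagonal_add_mul_sub hY (dslope f (d i)) d k j
  rw [cfc_apply_eq_realDiagonal_add_sub_mul hY f d i j, add_sub_cancel_left, Matrix.add_apply,
    Matrix.add_apply, add_assoc, secondOrderTerm, Matrix.of_apply, Matrix.mul_assoc,
    Matrix.mul_apply, Matrix.mul_apply]
  simp only [hcol, add_sub_cancel_left, mul_add, Finset.sum_add_distrib]
  simp [realDiagonal, Matrix.diagonal_apply, loewnerMatrix]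

lemma secondOrderTerm_smul (f : ℝ → ℝ) (d : ι → ℝ) (r : ℝ) (H Y : Matrix ι ι 𝕜) :
    secondOrderTerm f d (r • H) Y = r ^ 2 • secondOrderTerm f d H Y := by
  ext i j
  simp [secondOrderTerm, smul_smul, sq]

lemma secondOrderTerm_realDiagonal_apply (f : ℝ → ℝ) (d : ι → ℝ) (H : Matrix ι ι 𝕜) (i j : ι) :
    secondOrderTerm f d H (realDiagonal 𝕜 d) i j =
      ∑ k, H i k * (dslope (dslope f (d i)) (d j) (d k) : ℝ) * H k j := by
  rw [secondOrderTerm, Matrix.of_apply, cfc_realDiagonal, realDiagonal, Matrix.mul_apply]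
  simp only [mul_diagonal, Function.comp_apply]

end Diagonal

section Convexity

open scoped Matrix.Norms.L2Operator

lemma tendsto_secondOrderTerm {ι X : Type*} [Fintype ι] [DecidableEq ι] {I : Set ℝ}
    (hI : IsOpen I) {f : ℝ → ℝ} (hf : DifferentiableOn ℝ f I)
    (hf' : DifferentiableOn ℝ (deriv f) I) {d : ι → ℝ} (hd : ∀ i, d i ∈ I) (H : Matrix ι ι ℂ)
    {l : Filter X} {Y : X → Matrix ι ι ℂ} {Y₀ : Matrix ι ι ℂ} (hY : Tendsto Y l (𝓝 Y₀))
    (hYherm : ∀ᶠ x in l, (Y x).IsHermitian) (hY₀ : Y₀.IsHermitian) (hY₀I : spectrum ℝ Y₀ ⊆ I) :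
    Tendsto (fun x => secondOrderTerm f d H (Y x)) l (𝓝 (secondOrderTerm f d H Y₀)) := by
  refine tendsto_pi_nhds.2 fun i => tendsto_pi_nhds.2 fun j => ?_
  have hcfc := tendsto_cfc_of_isOpen (p := IsSelfAdjoint) hI
    (continuousOn_dslope_dslope hI hf hf' (hd i) (hd j)) hY hYherm hY₀ hY₀I
  have hentry : Continuous fun Z : Matrix ι ι ℂ => (H * Z * H) i j :=
    ((continuous_const.matrix_mul continuous_id).matrix_mul continuous_const).matrix_elem i j
  exact (hentry.tendsto _).comp hcfc

lemma MatrixConvexOn.posSemidef_secondOrderTerm_add {n : ℕ} {f : ℝ → ℝ} {I : Set ℝ}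
    (hconv : MatrixConvexOn n f I) {d : Fin n → ℝ} {H : Matrix (Fin n) (Fin n) ℂ}
    (hH : H.IsHermitian) (hpos : spectrum ℝ (realDiagonal ℂ d + H) ⊆ I)
    (hneg : spectrum ℝ (realDiagonal ℂ d + -H) ⊆ I) :
    (secondOrderTerm f d H (realDiagonal ℂ d + H) +
      secondOrderTerm f d H (realDiagonal ℂ d + -H)).PosSemidef := by
  have hD := isHermitian_realDiagonal (𝕜 := ℂ) d
  have hmid : (1 / 2 : ℝ) • (realDiagonal ℂ d + H) + (1 - 1 / 2 : ℝ) • (realDiagonal ℂ d + -H) =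
      realDiagonal ℂ d := by module
  have heven : secondOrderTerm f d (-H) (realDiagonal ℂ d + -H) =
      secondOrderTerm f d H (realDiagonal ℂ d + -H) := by
    simpa using secondOrderTerm_smul f d (-1) H (realDiagonal ℂ d + -H)
  have hconv_mid := hconv _ _ (hD.add hH) (hD.add hH.neg) hpos hneg (1 / 2) (by norm_num)
    (by norm_num)
  rw [hmid, cfc_realDiagonal, cfc_realDiagonal_add hH, cfc_realDiagonal_add hH.neg,
    heven] at hconv_mid
  convert hconv_mid.smul (zero_le_two (α := ℝ)) using 1
  have hodd : (-H) ⊙ loewnerMatrix ℂ f d = -(H ⊙ loewnerMatrix ℂ f d) := by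
    simpa using smul_hadamard H (loewnerMatrix ℂ f d) (-1 : ℂ)
  rw [hodd]
  module

open scoped MatrixOrder in
lemma MatrixConvexOn.posSemidef_secondOrderTerm_realDiagonal {n : ℕ} {f : ℝ → ℝ} {I : Set ℝ}
    (hI : IsOpen I) (hf : DifferentiableOn ℝ f I) (hf' : DifferentiableOn ℝ (deriv f) I)
    (hconv : MatrixConvexOn n f I) {d : Fin n → ℝ} (hd : ∀ i, d i ∈ I)
    {H : Matrix (Fin n) (Fin n) ℂ} (hH : H.IsHermitian) :
    (secondOrderTerm f d H (realDiagonal ℂ d)).PosSemidef := by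
  have hD := isHermitian_realDiagonal (𝕜 := ℂ) d
  have hDI : spectrum ℝ (realDiagonal ℂ d) ⊆ I := by
    rw [spectrum_realDiagonal]
    exact range_subset_iff.2 hd
  let Y (ε : ℝ) : Matrix (Fin n) (Fin n) ℂ := realDiagonal ℂ d + ε • H
  have hYherm (ε : ℝ) : (Y ε).IsHermitian := hD.add (hH.smul (.all ε))
  have hY : Tendsto Y (𝓝 0) (𝓝 (realDiagonal ℂ d)) := by
    simpa [Y] using (by fun_prop : Continuous Y).tendsto 0
  have hYI : ∀ᶠ ε in 𝓝 0, spectrum ℝ (Y ε) ⊆ I :=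
    eventually_spectrum_subset_of_tendsto hY (hI.mem_nhdsSet.2 hDI)
  have hneg : Tendsto (fun ε : ℝ => -ε) (𝓝 0) (𝓝 0) := continuous_neg.tendsto' 0 0 neg_zero
  let S (ε : ℝ) : Matrix (Fin n) (Fin n) ℂ := secondOrderTerm f d H (Y ε)
  have hS : Tendsto S (𝓝 0) (𝓝 (secondOrderTerm f d H (realDiagonal ℂ d))) :=
    tendsto_secondOrderTerm hI hf hf' hd H hY (.of_forall hYherm) hD hDI
  have hlim := (hS.add (hS.comp hneg)).mono_left (nhdsWithin_le_nhds (s := {0}ᶜ))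
  have hpsd : ∀ᶠ ε in 𝓝[≠] 0, (S ε + S (-ε)).PosSemidef := by
    filter_upwards [nhdsWithin_le_nhds hYI, nhdsWithin_le_nhds (hneg.eventually hYI),
      self_mem_nhdsWithin] with ε hpos hneg hε
    simp only [Y, neg_smul] at hpos hneg
    have hscaled := hconv.posSemidef_secondOrderTerm_add (hH.smul (.all ε)) hpos hneg
    rw [secondOrderTerm_smul, secondOrderTerm_smul, ← smul_add] at hscaled
    have := hscaled.smul (inv_nonneg.2 (sq_nonneg ε))
    rwa [inv_smul_smul₀ (pow_ne_zero 2 hε), ← neg_smul] at this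
  have hdouble := nonneg_iff_posSemidef.1
    (ge_of_tendsto hlim (hpsd.mono fun _ h => nonneg_iff_posSemidef.2 h))
  rw [← two_smul ℝ] at hdouble
  simpa using hdouble.smul (inv_nonneg.2 (zero_le_two (α := ℝ)))

lemma MatrixConvexOn.posSemidef_loewnerMatrix_dslope {m : ℕ} {f : ℝ → ℝ} {I : Set ℝ}
    (hI : IsOpen I) (hf : DifferentiableOn ℝ f I) (hf' : DifferentiableOn ℝ (deriv f) I)
    (hconv : MatrixConvexOn (m + 1) f I) {s : ℝ} (hs : s ∈ I) {x : Fin m → ℝ} (hx : ∀ i, x i ∈ I) :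
    (loewnerMatrix ℂ (dslope f s) x).PosSemidef := by
  have hd : ∀ i, (Fin.cons s x : Fin (m + 1) → ℝ) i ∈ I := Fin.cases hs hx
  -- With `H` bordered, only the term of the node `s` survives in the block indexed by `x`.
  let H : Matrix (Fin (m + 1)) (Fin (m + 1)) ℂ := .of fun i j => if i = 0 ∨ j = 0 then 1 else 0
  have hH : H.IsHermitian := by
    ext i j
    simp [H, or_comm]
  convert (hconv.posSemidef_secondOrderTerm_realDiagonal hI hf hf' hd hH).submatrix
    (Fin.succ : Fin m → Fin (m + 1)) using 1
  ext i j
  have hsymm : dslope (dslope f (x i)) (x j) s = dslope (dslope f s) (x i) (x j) := by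
    rw [dslope_comm, dslope_dslope_swap hI hf hf' (hx i) (hx j) hs]
  rw [Matrix.submatrix_apply, secondOrderTerm_realDiagonal_apply, Fin.sum_univ_succ]
  simp [H, loewnerMatrix, hsymm]

end Convexity

section DaleckiiKrein

open Unitary
open scoped Matrix.Norms.L2Operator

variable {ι : Type*} [Fintype ι] [DecidableEq ι] {I : Set ℝ} {f : ℝ → ℝ} {Y : ℝ → Matrix ι ι ℂ}
  {Y' : Matrix ι ι ℂ} {t₀ : ℝ}

lemma hasDerivAt_cfc_of_eq_realDiagonal (hI : IsOpen I) (hf : ∀ a ∈ I, ContinuousOn (dslope f a) I)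
    (hY : HasDerivAt Y Y' t₀) (hYherm : ∀ t, (Y t).IsHermitian) {d : ι → ℝ}
    (hY₀ : Y t₀ = realDiagonal ℂ d) (hd : ∀ i, d i ∈ I) :
    HasDerivAt (fun t => cfc f (Y t)) (Y' ⊙ loewnerMatrix ℂ f d) t₀ := by
  have hY₀I : spectrum ℝ (Y t₀) ⊆ I := by
    rw [hY₀, spectrum_realDiagonal]
    exact range_subset_iff.2 hd
  rw [hasDerivAt_iff_tendsto_slope] at hY ⊢
  refine tendsto_pi_nhds.2 fun i => tendsto_pi_nhds.2 fun j => ?_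
  have hslope : ∀ t, slope (fun t => cfc f (Y t)) t₀ t i j =
      (slope Y t₀ t * cfc (dslope f (d i)) (Y t)) i j := by
    intro t
    rw [slope_def_module, slope_def_module, hY₀, Matrix.smul_apply, Matrix.sub_apply,
      cfc_apply_eq_realDiagonal_add_sub_mul (hYherm t) f d i j, cfc_realDiagonal,
      add_sub_cancel_left, Matrix.smul_mul, Matrix.smul_apply]
  have hcfc : Tendsto (fun t => cfc (dslope f (d i)) (Y t)) (𝓝[≠] t₀)
      (𝓝 (cfc (dslope f (d i)) (Y t₀))) :=
    tendsto_cfc_of_isOpen (p := IsSelfAdjoint) hI (hf _ (hd i))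
      (hasDerivAt_iff_tendsto_slope.2 hY).continuousAt.continuousWithinAt (.of_forall hYherm)
      (hYherm t₀) hY₀I
  have hlim : (Y' ⊙ loewnerMatrix ℂ f d) i j = (Y' * cfc (dslope f (d i)) (Y t₀)) i j := by
    rw [hY₀, cfc_realDiagonal, realDiagonal, mul_diagonal, hadamard_apply]
    rfl
  simp only [hslope, hlim]
  exact ((continuous_id.matrix_elem i j).tendsto _).comp (hY.mul hcfc)

lemma cfc_conjStarAlgAut {X : Matrix ι ι ℂ} (hX : X.IsHermitian) (U : unitaryGroup ι ℂ)
    (f : ℝ → ℝ) : cfc f (conjStarAlgAut ℂ _ U X) = conjStarAlgAut ℂ _ U (cfc f X) := by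
  have hU : Continuous (conjStarAlgAut ℂ (Matrix ι ι ℂ) U) := by
    change Continuous fun Z => (U : Matrix ι ι ℂ) * Z * (star U : Matrix ι ι ℂ)
    fun_prop
  exact (StarAlgHomClass.map_cfc (S := ℂ) (conjStarAlgAut ℂ (Matrix ι ι ℂ) U) f X
    (Matrix.finite_real_spectrum.continuousOn f) hU hX (hX.isSelfAdjoint.map _)).symm

lemma hasDerivAt_cfc (hI : IsOpen I) (hf : ∀ a ∈ I, ContinuousOn (dslope f a) I)
    (hY : HasDerivAt Y Y' t₀) (hYherm : ∀ t, (Y t).IsHermitian) {U : unitaryGroup ι ℂ} {d : ι → ℝ}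
    (hY₀ : Y t₀ = conjStarAlgAut ℂ _ U (realDiagonal ℂ d)) (hd : ∀ i, d i ∈ I) :
    HasDerivAt (fun t => cfc f (Y t))
      (conjStarAlgAut ℂ _ U (conjStarAlgAut ℂ _ (star U) Y' ⊙ loewnerMatrix ℂ f d)) t₀ := by
  have hconj {U : unitaryGroup ι ℂ} {Z : ℝ → Matrix ι ι ℂ} {Z' : Matrix ι ι ℂ}
      (hZ : HasDerivAt Z Z' t₀) :
      HasDerivAt (fun t => conjStarAlgAut ℂ _ U (Z t)) (conjStarAlgAut ℂ _ U Z') t₀ := by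
    simp only [conjStarAlgAut_apply]
    exact (hZ.const_mul _).mul_const _
  have hcfc (t : ℝ) :
      conjStarAlgAut ℂ _ U (cfc f (conjStarAlgAut ℂ _ (star U) (Y t))) = cfc f (Y t) := by
    rw [cfc_conjStarAlgAut (hYherm t), ← conjStarAlgAut_mul_apply, mul_star_self, map_one]
    rfl
  simp only [← hcfc]
  refine hconj (hasDerivAt_cfc_of_eq_realDiagonal hI hf (hconj hY) (fun t => ?_) ?_ hd)
  · exact IsSelfAdjoint.map (hYherm t) _
  · rw [hY₀, ← conjStarAlgAut_mul_apply, star_mul_self, map_one]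
    rfl

end DaleckiiKrein

section Monotonicity

open Unitary
open scoped MatrixOrder Matrix.Norms.L2Operator

lemma posSemidef_sub_of_hasDerivAt {ι : Type*} [Finite ι] {F F' : ℝ → Matrix ι ι ℂ}
    {a b : ℝ} (hab : a ≤ b) (hF : ∀ t, (F t).IsHermitian)
    (hF' : ∀ t ∈ Icc a b, HasDerivAt F (F' t) t) (hpos : ∀ t ∈ Icc a b, (F' t).PosSemidef) :
    (F b - F a).PosSemidef := by
  classical
  cases nonempty_fintype ι
  refine .of_dotProduct_mulVec_nonneg ((hF b).sub (hF a)) fun v => ?_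
  let Q : Matrix ι ι ℂ →ₗ[ℝ] ℝ :=
    { toFun := fun Z => (star v ⬝ᵥ Z *ᵥ v).re
      map_add' := fun Z W => by rw [add_mulVec, dotProduct_add, Complex.add_re]
      map_smul' := fun r Z => by
        rw [smul_mulVec, dotProduct_smul, Complex.smul_re, RingHom.id_apply] }
  have hQ {t : ℝ} (ht : t ∈ Icc a b) : HasDerivAt (fun t => Q (F t)) (Q (F' t)) t :=
    Q.toContinuousLinearMap.hasFDerivAt.comp_hasDerivAt t (hF' t ht)
  have hmono : MonotoneOn (fun t => Q (F t)) (Icc a b) := by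
    refine monotoneOn_of_hasDerivWithinAt_nonneg (convex_Icc a b)
      (fun t ht => (hQ ht).continuousAt.continuousWithinAt)
      (fun t ht => (hQ (interior_subset ht)).hasDerivWithinAt) fun t ht => ?_
    exact (Complex.le_def.1 ((hpos t (interior_subset ht)).dotProduct_mulVec_nonneg v)).1
  have hre : 0 ≤ Q (F b - F a) := by
    rw [map_sub]
    exact sub_nonneg.2 (hmono (left_mem_Icc.2 hab) (right_mem_Icc.2 hab) hab)
  exact Complex.le_def.2 ⟨hre, (((hF b).sub (hF a)).im_star_dotProduct_mulVec_self v).symm⟩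

lemma posSemidef_conjStarAlgAut {ι : Type*} [Fintype ι] [DecidableEq ι] {X : Matrix ι ι ℂ}
    (hX : X.PosSemidef) (U : unitaryGroup ι ℂ) :
    (conjStarAlgAut ℂ _ U X).PosSemidef := by
  rw [conjStarAlgAut_apply]
  exact hX.mul_mul_conjTranspose_same _

lemma matrixMonotoneOn_of_posSemidef_loewnerMatrix {m : ℕ} {I : Set ℝ} (hI : IsOpen I)
    (hI' : I.OrdConnected) {h : ℝ → ℝ} (hh : ∀ a ∈ I, ContinuousOn (dslope h a) I)
    (hloewner : ∀ x : Fin m → ℝ, (∀ i, x i ∈ I) → (loewnerMatrix ℂ h x).PosSemidef) :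
    MatrixMonotoneOn m h I := by
  intro A B hA hB hAI hBI hAB
  let Y (t : ℝ) : Matrix (Fin m) (Fin m) ℂ := A + t • (B - A)
  have hY (t : ℝ) : HasDerivAt Y (B - A) t := by
    simpa [Y] using ((hasDerivAt_id' t).smul_const (B - A)).const_add A
  have hYherm (t : ℝ) : (Y t).IsHermitian := hA.add (hAB.1.smul (.all t))
  have hsegment {t : ℝ} (ht : t ∈ Icc (0 : ℝ) 1) : Y t ∈ Icc A B :=
    (convex_Icc A B).add_smul_sub_mem (left_mem_Icc.2 hAB) (right_mem_Icc.2 hAB) ht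
  have hYI {t : ℝ} (ht : t ∈ Icc (0 : ℝ) 1) : spectrum ℝ (Y t) ⊆ I :=
    spectrum_subset_of_mem_Icc hI' hA hB (hYherm t) (hsegment ht) hAI hBI
  have hd {t : ℝ} (ht : t ∈ Icc (0 : ℝ) 1) (i : Fin m) : (hYherm t).eigenvalues i ∈ I :=
    hYI ht ((hYherm t).eigenvalues_mem_spectrum_real i)
  have hmono := posSemidef_sub_of_hasDerivAt zero_le_one
    (fun t => cfc_predicate (p := IsSelfAdjoint) h (Y t))
    (fun t ht => hasDerivAt_cfc hI hh (hY t) hYherm (hYherm t).spectral_theorem (hd ht))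
    (fun t ht => posSemidef_conjStarAlgAut
      ((posSemidef_conjStarAlgAut hAB _).hadamard (hloewner _ (hd ht))) _)
  simpa [Y] using hmono

end Monotonicity

theorem stmt_13_general {m : ℕ} {I : Set ℝ} (hI : IsOpen I) (hI' : I.OrdConnected) {f : ℝ → ℝ}
    (hf : DifferentiableOn ℝ f I) (hf' : DifferentiableOn ℝ (deriv f) I)
    (hconv : MatrixConvexOn (m + 1) f I) {s : ℝ} (hs : s ∈ I) :
    MatrixMonotoneOn m (dslope f s) I :=
  matrixMonotoneOn_of_posSemidef_loewnerMatrix hI hI'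
    (fun _ ha => continuousOn_dslope_dslope hI hf hf' hs ha)
    fun _ hx => hconv.posSemidef_loewnerMatrix_dslope hI hf hf' hs hx

/-- The key step in the proof of Theorem 3.2: if `f` is `C²` and matrix convex of order `n` on
`(0,α)`, then for each fixed `s ∈ (0,α)` the divided difference `h_s(t) = [t,s]_f` is matrix
monotone of order `n - 1` on `(0,α)`. -/
theorem stmt_13 (n : ℕ) (hn : 2 ≤ n) (α : EReal) (hα : 0 < α) (f : ℝ → ℝ)
    (hf : ContDiffOn ℝ 2 f {x : ℝ | 0 < x ∧ (x : EReal) < α})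
    (hconv : MatrixConvexOn n f {x : ℝ | 0 < x ∧ (x : EReal) < α})
    (s : ℝ) (hs : 0 < s) (hsα : (s : EReal) < α) :
    MatrixMonotoneOn (n - 1)
      (fun t => if t = s then deriv f s else (f t - f s) / (t - s))
      {x : ℝ | 0 < x ∧ (x : EReal) < α} := by
  obtain ⟨m, rfl⟩ : ∃ m, n = m + 1 := Nat.exists_eq_add_of_le' (Nat.one_le_of_lt hn)
  have hI : IsOpen {x : ℝ | 0 < x ∧ (x : EReal) < α} :=
    isOpen_Ioi.inter (isOpen_Iio.preimage continuous_coe_real_ereal)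
  have hI' : OrdConnected {x : ℝ | 0 < x ∧ (x : EReal) < α} :=
    ordConnected_Ioi.inter (ordConnected_Iio.preimage_mono EReal.coe_strictMono.monotone)
  have hf' := (hf.deriv_of_isOpen hI one_add_one_eq_two.le).differentiableOn one_ne_zero
  rw [Nat.add_sub_cancel, ← dslope_eq_ite]
  exact stmt_13_general hI hI' (hf.differentiableOn two_ne_zero) hf' hconv ⟨hs, hsα⟩
end

section
/- Let 0 < α ≤ ∞ and let f : [0,α) → ℝ be continuous with f(0) ≤ 0 and matrix convex of order 2 on [0,α). Define g(t) = f(t)/t on (0,α) and let G : (0,α) → ℝ be any antiderivative of g (i.e. G' = g on (0,α)). Then G is matrix convex of order 2 on (0,α). -/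
open Matrix Set MeasureTheory
open scoped ComplexOrder

/-!
Up to a constant, `G t = c * log t + ∫₀¹ (f (u * t) - c) / u du`, where `c ≤ 0` is the limit of `f`
at `0`: a superposition of the dilates `t ↦ f (u * t)`, which are as convex as `f`, of constants,
and of a nonnegative multiple of `-log`, which is operator convex.

The integral may diverge at `u = 0`, so we argue by duality. Pairing the gap in the convexity
inequality with a fixed vector turns it into a finite sum `∑ w k * φ (p k)` that is nonnegative for
every matrix convex `φ`. Constants show that the weights sum to zero, dilates of `f` show that
`u ↦ ∑ w k * G (u * p k)` is increasing on `(0, 1]`, and in logarithmic coordinates its limit as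
`u → 0` is seen to be `c * ∑ w k * log (p k) ≥ 0`. So its value at `u = 1` is nonnegative.
-/

lemma isHermitian_convexComb {m 𝕜 : Type*} [RCLike 𝕜] {A B : Matrix m m 𝕜} (hA : A.IsHermitian)
    (hB : B.IsHermitian) (l : ℝ) : (l • A + (1 - l) • B).IsHermitian :=
  (hA.smul (.all l)).add (hB.smul (.all (1 - l)))

section NumericalRange

variable {m 𝕜 : Type*} [Fintype m] [DecidableEq m] [RCLike 𝕜] {A B : Matrix m m 𝕜} {I : Set ℝ}

lemma exists_nonneg_weights_dotProduct_cfc_mulVec (hA : A.IsHermitian) (x : m → 𝕜) :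
    ∃ w : m → ℝ, (∀ i, 0 ≤ w i) ∧ ∀ φ : ℝ → ℝ,
      star x ⬝ᵥ (cfc φ A *ᵥ x) = ((∑ i, w i * φ (hA.eigenvalues i) : ℝ) : 𝕜) := by
  set U := (hA.eigenvectorUnitary : Matrix m m 𝕜) with hU
  refine ⟨fun i => ‖(star U *ᵥ x) i‖ ^ 2, fun i => by positivity, fun φ => ?_⟩
  have hconj : star x ᵥ* U = star (star U *ᵥ x) := by
    rw [star_mulVec, star_eq_conjTranspose, conjTranspose_conjTranspose]
  rw [hA.cfc_eq, IsHermitian.cfc, Unitary.conjStarAlgAut_apply, ← hU, ← mulVec_mulVec,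
    ← mulVec_mulVec, dotProduct_mulVec, hconj, dotProduct]
  push_cast
  refine Finset.sum_congr rfl fun i _ => ?_
  rw [mulVec_diagonal, ← RCLike.conj_mul, Pi.star_apply, RCLike.star_def]
  simp only [Function.comp_apply]
  ring

lemma re_dotProduct_mulVec_mem (hA : A.IsHermitian) (hI : Convex ℝ I) (hAI : spectrum ℝ A ⊆ I)
    {x : m → 𝕜} (hx : star x ⬝ᵥ x = 1) : RCLike.re (star x ⬝ᵥ (A *ᵥ x)) ∈ I := by
  obtain ⟨w, hw_nonneg, hw⟩ := exists_nonneg_weights_dotProduct_cfc_mulVec hA x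
  have hw_sum : ∑ i, w i = 1 := by
    have hone := hw fun _ => 1
    rw [cfc_const_one ℝ A hA.isSelfAdjoint, one_mulVec, hx] at hone
    simp only [mul_one] at hone
    exact_mod_cast hone.symm
  have hw_id : star x ⬝ᵥ (A *ᵥ x) = ((∑ i, w i * hA.eigenvalues i : ℝ) : 𝕜) := by
    simpa only [cfc_id' ℝ A hA.isSelfAdjoint] using hw fun t => t
  rw [hw_id, RCLike.ofReal_re]
  exact hI.sum_mem (fun i _ => hw_nonneg i) hw_sum
    fun i _ => hAI (hA.eigenvalues_mem_spectrum_real i)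

lemma spectrum_convexComb_subset (hA : A.IsHermitian) (hB : B.IsHermitian) (hI : Convex ℝ I)
    (hAI : spectrum ℝ A ⊆ I) (hBI : spectrum ℝ B ⊆ I) {l : ℝ} (hl₀ : 0 ≤ l) (hl₁ : l ≤ 1) :
    spectrum ℝ (l • A + (1 - l) • B) ⊆ I := by
  have hC := isHermitian_convexComb hA hB l
  rw [hC.spectrum_real_eq_range_eigenvalues]
  rintro _ ⟨i, rfl⟩
  set x : m → 𝕜 := ⇑(hC.eigenvectorBasis i) with hx_def
  have hx : star x ⬝ᵥ x = 1 := by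
    rw [dotProduct_comm, hx_def, ← EuclideanSpace.inner_eq_star_dotProduct,
      hC.eigenvectorBasis.inner_eq_one]
  have hre : hC.eigenvalues i = l • RCLike.re (star x ⬝ᵥ (A *ᵥ x)) +
      (1 - l) • RCLike.re (star x ⬝ᵥ (B *ᵥ x)) := by
    rw [hC.eigenvalues_eq, ← hx_def, add_mulVec, dotProduct_add, smul_mulVec, smul_mulVec,
      dotProduct_smul, dotProduct_smul, map_add, RCLike.smul_re, RCLike.smul_re, smul_eq_mul,
      smul_eq_mul]
  rw [hre]
  exact hI (re_dotProduct_mulVec_mem hA hI hAI hx) (re_dotProduct_mulVec_mem hB hI hBI hx) hl₀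
    (sub_nonneg.2 hl₁) (add_sub_cancel l 1)

end NumericalRange

section JensenGap

variable {n : ℕ} {A B : Matrix (Fin n) (Fin n) ℂ} {I : Set ℝ}

/-- The gap in the convexity inequality for `φ` at `A`, `B` with weight `l`: matrix convexity of `φ`
says that this matrix is positive semidefinite. -/
noncomputable def jensenGap (A B : Matrix (Fin n) (Fin n) ℂ) (l : ℝ) (φ : ℝ → ℝ) :
    Matrix (Fin n) (Fin n) ℂ :=
  l • cfc φ A + (1 - l) • cfc φ B - cfc φ (l • A + (1 - l) • B)

lemma isHermitian_jensenGap (A B : Matrix (Fin n) (Fin n) ℂ) (l : ℝ) (φ : ℝ → ℝ) :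
    (jensenGap A B l φ).IsHermitian :=
  (isHermitian_convexComb (cfc_predicate φ A) (cfc_predicate φ B) l).sub (cfc_predicate φ _)

lemma exists_weights_dotProduct_jensenGap_mulVec (hA : A.IsHermitian) (hB : B.IsHermitian)
    (hI : Convex ℝ I) (hAI : spectrum ℝ A ⊆ I) (hBI : spectrum ℝ B ⊆ I) {l : ℝ} (hl₀ : 0 ≤ l)
    (hl₁ : l ≤ 1) (x : Fin n → ℂ) :
    ∃ w p : Fin n ⊕ Fin n ⊕ Fin n → ℝ, (∀ k, p k ∈ I) ∧ ∀ φ : ℝ → ℝ,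
      star x ⬝ᵥ (jensenGap A B l φ *ᵥ x) = ((∑ k, w k * φ (p k) : ℝ) : ℂ) := by
  have hC := isHermitian_convexComb hA hB l
  have hCI := spectrum_convexComb_subset hA hB hI hAI hBI hl₀ hl₁
  obtain ⟨a, -, ha⟩ := exists_nonneg_weights_dotProduct_cfc_mulVec hA x
  obtain ⟨b, -, hb⟩ := exists_nonneg_weights_dotProduct_cfc_mulVec hB x
  obtain ⟨c, -, hc⟩ := exists_nonneg_weights_dotProduct_cfc_mulVec hC x
  refine ⟨Sum.elim (l • a) (Sum.elim ((1 - l) • b) (-c)),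
    Sum.elim hA.eigenvalues (Sum.elim hB.eigenvalues hC.eigenvalues), ?_, fun φ => ?_⟩
  · rintro (k | k | k)
    · exact hAI (hA.eigenvalues_mem_spectrum_real k)
    · exact hBI (hB.eigenvalues_mem_spectrum_real k)
    · exact hCI (hC.eigenvalues_mem_spectrum_real k)
  · rw [jensenGap, sub_mulVec, add_mulVec, smul_mulVec, smul_mulVec, dotProduct_sub,
      dotProduct_add, dotProduct_smul, dotProduct_smul, ha, hb, hc]
    simp only [Fintype.sum_sum_type, Sum.elim_inl, Sum.elim_inr, Pi.smul_apply, Pi.neg_apply,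
      smul_eq_mul, mul_assoc, ← Finset.mul_sum, neg_mul, Finset.sum_neg_distrib,
      Complex.real_smul, Complex.coe_algebraMap]
    push_cast
    ring

/-- Bipolar principle: the matrix convex functions are cut out by the finitely supported signed
measures that are nonnegative on all of them. -/
lemma matrixConvexOn_of_forall_sum_nonneg (hI : Convex ℝ I) {g : ℝ → ℝ}
    (hg : ∀ (ι : Type) [Fintype ι] (w p : ι → ℝ), (∀ k, p k ∈ I) →
      (∀ φ, MatrixConvexOn n φ I → 0 ≤ ∑ k, w k * φ (p k)) → 0 ≤ ∑ k, w k * g (p k)) :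
    MatrixConvexOn n g I := by
  intro A B hA hB hAI hBI l hl₀ hl₁
  refine .of_dotProduct_mulVec_nonneg (isHermitian_jensenGap A B l g) fun x => ?_
  obtain ⟨w, p, hp, hgap⟩ :=
    exists_weights_dotProduct_jensenGap_mulVec hA hB hI hAI hBI hl₀ hl₁ x
  change 0 ≤ star x ⬝ᵥ (jensenGap A B l g *ᵥ x)
  rw [hgap, Complex.zero_le_real]
  refine hg _ w p hp fun φ hφ => ?_
  rw [← Complex.zero_le_real, ← hgap]
  exact (hφ A B hA hB hAI hBI l hl₀ hl₁).dotProduct_mulVec_nonneg x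

end JensenGap

section MatrixConvexFunctions

variable {n : ℕ} {f : ℝ → ℝ} {I J : Set ℝ}

lemma MatrixConvexOn.mono (hf : MatrixConvexOn n f I) (hJI : J ⊆ I) : MatrixConvexOn n f J :=
  fun A B hA hB hAJ hBJ => hf A B hA hB (hAJ.trans hJI) (hBJ.trans hJI)

lemma matrixConvexOn_const (c : ℝ) : MatrixConvexOn n (fun _ => c) I := by
  intro A B hA hB _ _ l _ _
  have hC := isHermitian_convexComb hA hB l
  rw [cfc_const c A hA.isSelfAdjoint, cfc_const c B hB.isSelfAdjoint,
    cfc_const c _ hC.isSelfAdjoint, ← add_smul, add_sub_cancel, one_smul, sub_self]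
  exact .zero

lemma MatrixConvexOn.comp_const_mul (hf : MatrixConvexOn n f I) {u : ℝ}
    (hu : MapsTo (u * ·) J I) : MatrixConvexOn n (fun t => f (u * t)) J := by
  intro A B hA hB hAJ hBJ l hl₀ hl₁
  have hcfc {X : Matrix (Fin n) (Fin n) ℂ} (hX : X.IsHermitian) :
      cfc (fun t => f (u * t)) X = cfc f (u • X) :=
    cfc_comp_const_mul u f X (((finite_real_spectrum (A := X)).image _).continuousOn f)
      hX.isSelfAdjoint
  have hspec {X : Matrix (Fin n) (Fin n) ℂ} (hX : X.IsHermitian) (hXJ : spectrum ℝ X ⊆ J) :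
      spectrum ℝ (u • X) ⊆ I := by
    rw [← cfc_const_mul_id u X hX.isSelfAdjoint, cfc_map_spectrum _ X hX.isSelfAdjoint]
    exact (hu.mono_left hXJ).image_subset
  rw [hcfc hA, hcfc hB, hcfc (isHermitian_convexComb hA hB l), smul_add, smul_comm u l A,
    smul_comm u (1 - l) B]
  exact hf _ _ (hA.smul (.all u)) (hB.smul (.all u)) (hspec hA hAJ) (hspec hB hBJ) l hl₀ hl₁

open scoped MatrixOrder Matrix.Norms.L2Operator in
lemma matrixConvexOn_neg_log : MatrixConvexOn n (fun t => -Real.log t) (Ioi 0) := by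
  intro A B hA hB hAI hBI l hl₀ hl₁
  have hpos {X : Matrix (Fin n) (Fin n) ℂ} (hX : X.IsHermitian) (hXI : spectrum ℝ X ⊆ Ioi 0) :
      IsStrictlyPositive X :=
    (StarOrderedRing.isStrictlyPositive_iff_spectrum_pos X hX.isSelfAdjoint).2 hXI
  have hlog : l • cfc Real.log A + (1 - l) • cfc Real.log B ≤
      cfc Real.log (l • A + (1 - l) • B) :=
    (CFC.concaveOn_log (A := Matrix (Fin n) (Fin n) ℂ)).2 (hpos hA hAI) (hpos hB hBI) hl₀
      (sub_nonneg.2 hl₁) (add_sub_cancel l 1)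
  rw [← Matrix.le_iff, cfc_neg, cfc_neg, cfc_neg, smul_neg, smul_neg, ← neg_add]
  exact neg_le_neg hlog

end MatrixConvexFunctions

section LogarithmicAntiderivative

open Filter Topology

lemma tendsto_sub_comp_add_atBot {E : Type*} [NormedAddCommGroup E] [NormedSpace ℝ E]
    {F F' : ℝ → E} {c : E} (hF : ∀ᶠ s in atBot, HasDerivAt F (F' s) s)
    (hF' : Tendsto F' atBot (𝓝 c)) (a b : ℝ) :
    Tendsto (fun s => F (s + a) - F (s + b)) atBot (𝓝 ((a - b) • c)) := by
  rw [Metric.tendsto_nhds]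
  intro ε hε
  obtain ⟨η, hη, hηε⟩ := exists_pos_mul_lt hε |a - b|
  obtain ⟨S, hS⟩ : ∃ S, ∀ s ≤ S, HasDerivAt F (F' s) s ∧ dist (F' s) c < η :=
    eventually_atBot.1 (hF.and (Metric.tendsto_nhds.1 hF' η hη))
  filter_upwards [eventually_le_atBot (S - a), eventually_le_atBot (S - b)] with s hsa hsb
  have hmean : ‖(F (s + a) - (s + a) • c) - (F (s + b) - (s + b) • c)‖ ≤
      η * ‖(s + a) - (s + b)‖ :=
    (convex_Iic S).norm_image_sub_le_of_norm_hasDerivWithin_le (f := fun r => F r - r • c)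
      (f' := fun r => F' r - (1 : ℝ) • c)
      (fun r hr => ((hS r hr).1.sub ((hasDerivAt_id r).smul_const c)).hasDerivWithinAt)
      (fun r hr => by rw [one_smul, ← dist_eq_norm]; exact (hS r hr).2.le)
      (le_sub_iff_add_le.1 hsb) (le_sub_iff_add_le.1 hsa)
  calc dist (F (s + a) - F (s + b)) ((a - b) • c)
      = ‖(F (s + a) - (s + a) • c) - (F (s + b) - (s + b) • c)‖ := by
        rw [dist_eq_norm]; congr 1; module
    _ ≤ η * ‖(s + a) - (s + b)‖ := hmean
    _ = |a - b| * η := by rw [add_sub_add_left_eq_sub, Real.norm_eq_abs, mul_comm]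
    _ < ε := hηε

lemma tendsto_sub_comp_mul_nhdsGT_zero {f G : ℝ → ℝ} {c : ℝ}
    (hG : ∀ᶠ t in 𝓝[>] 0, HasDerivAt G (f t / t) t) (hf : Tendsto f (𝓝[>] 0) (𝓝 c)) {a b : ℝ}
    (ha : 0 < a) (hb : 0 < b) :
    Tendsto (fun u => G (u * a) - G (u * b)) (𝓝[>] 0) (𝓝 ((Real.log a - Real.log b) * c)) := by
  have hG_exp : ∀ᶠ s in atBot, HasDerivAt (G ∘ Real.exp) (f (Real.exp s)) s := by
    filter_upwards [Real.tendsto_exp_atBot_nhdsGT.eventually hG] with s hs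
    simpa only [div_mul_cancel₀ _ (Real.exp_ne_zero s)] using hs.comp s (Real.hasDerivAt_exp s)
  refine ((tendsto_sub_comp_add_atBot hG_exp (hf.comp Real.tendsto_exp_atBot_nhdsGT) (Real.log a)
    (Real.log b)).comp Real.tendsto_log_nhdsGT_zero).congr' ?_
  filter_upwards [self_mem_nhdsWithin] with u (hu : 0 < u)
  simp only [Function.comp_apply, Real.exp_add, Real.exp_log hu, Real.exp_log ha, Real.exp_log hb]

variable {ι : Type*} [Fintype ι] {f G : ℝ → ℝ} {w p : ι → ℝ}

lemma tendsto_sum_mul_comp_mul_nhdsGT_zero {c : ℝ}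
    (hG : ∀ᶠ t in 𝓝[>] 0, HasDerivAt G (f t / t) t) (hf : Tendsto f (𝓝[>] 0) (𝓝 c))
    (hw : ∑ k, w k = 0) (hp : ∀ k, 0 < p k) :
    Tendsto (fun u => ∑ k, w k * G (u * p k)) (𝓝[>] 0)
      (𝓝 (c * ∑ k, w k * Real.log (p k))) := by
  have hincr : Tendsto (fun u => ∑ k, w k * (G (u * p k) - G (u * 1))) (𝓝[>] 0)
      (𝓝 (∑ k, w k * ((Real.log (p k) - Real.log 1) * c))) :=
    tendsto_finsetSum _ fun k _ =>
      (tendsto_sub_comp_mul_nhdsGT_zero hG hf (hp k) one_pos).const_mul (w k)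
  simpa only [mul_sub, Finset.sum_sub_distrib, ← Finset.sum_mul, hw, zero_mul, sub_zero,
    Real.log_one, ← mul_assoc, mul_comm c] using hincr

lemma hasDerivAt_sum_mul_comp_mul {u : ℝ} (hp : ∀ k, p k ≠ 0)
    (hG : ∀ k, HasDerivAt G (f (u * p k) / (u * p k)) (u * p k)) :
    HasDerivAt (fun v => ∑ k, w k * G (v * p k)) ((∑ k, w k * f (u * p k)) / u) u := by
  rw [Finset.sum_div]
  refine .fun_sum fun k _ => ?_
  have hchain : f (u * p k) / (u * p k) * p k = f (u * p k) / u := by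
    rw [← div_div, div_mul_cancel₀ _ (hp k)]
  rw [mul_div_assoc, ← hchain]
  exact ((hG k).comp u (hasDerivAt_mul_const (p k))).const_mul (w k)

lemma monotoneOn_sum_mul_comp_mul {s : Set ℝ} (hs : Convex ℝ s) (hs₀ : s ⊆ Ioi 0)
    (hp : ∀ k, p k ≠ 0) (hG : ∀ u ∈ s, ∀ k, HasDerivAt G (f (u * p k) / (u * p k)) (u * p k))
    (hf : ∀ u ∈ s, 0 ≤ ∑ k, w k * f (u * p k)) :
    MonotoneOn (fun u => ∑ k, w k * G (u * p k)) s :=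
  have hderiv u (hu : u ∈ s) := hasDerivAt_sum_mul_comp_mul (w := w) hp (hG u hu)
  monotoneOn_of_hasDerivWithinAt_nonneg hs
    (fun u hu => (hderiv u hu).continuousAt.continuousWithinAt)
    (fun u hu => (hderiv u (interior_subset hu)).hasDerivWithinAt)
    (fun u hu => div_nonneg (hf u (interior_subset hu)) (hs₀ (interior_subset hu)).le)

lemma sum_mul_antideriv_nonneg {c : ℝ} (hc : c ≤ 0)
    (hG₀ : ∀ᶠ t in 𝓝[>] 0, HasDerivAt G (f t / t) t) (hf₀ : Tendsto f (𝓝[>] 0) (𝓝 c))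
    (hp : ∀ k, 0 < p k)
    (hG : ∀ u ∈ Ioc 0 1, ∀ k, HasDerivAt G (f (u * p k) / (u * p k)) (u * p k))
    (hw : ∑ k, w k = 0) (hlog : ∑ k, w k * Real.log (p k) ≤ 0)
    (hf : ∀ u ∈ Ioc (0 : ℝ) 1, 0 ≤ ∑ k, w k * f (u * p k)) :
    0 ≤ ∑ k, w k * G (p k) := by
  have hmono := monotoneOn_sum_mul_comp_mul (convex_Ioc 0 1) Ioc_subset_Ioi_self
    (fun k => (hp k).ne') hG hf
  have hle : c * ∑ k, w k * Real.log (p k) ≤ ∑ k, w k * G (1 * p k) := by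
    refine le_of_tendsto (tendsto_sum_mul_comp_mul_nhdsGT_zero hG₀ hf₀ hw hp) ?_
    filter_upwards [Ioc_mem_nhdsGT one_pos] with u hu
    exact hmono hu ⟨one_pos, le_rfl⟩ hu.2
  simp only [one_mul] at hle
  exact (mul_nonneg_of_nonpos_of_nonpos hc hlog).trans hle

end LogarithmicAntiderivative

open Filter Topology in
theorem stmt_14_general {n : ℕ} {D : Set ℝ} {f G : ℝ → ℝ} {c : ℝ} (hD : IsLowerSet D)
    (hD₀ : D ∈ 𝓝 0) (hc : c ≤ 0) (hf₀ : Tendsto f (𝓝[>] 0) (𝓝 c))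
    (hf : MatrixConvexOn n f (Ioi 0 ∩ D)) (hG : ∀ t ∈ Ioi 0 ∩ D, HasDerivAt G (f t / t) t) :
    MatrixConvexOn n G (Ioi 0 ∩ D) := by
  have hscale u (hu : u ∈ Ioc (0 : ℝ) 1) : MapsTo (u * ·) (Ioi 0 ∩ D) (Ioi 0 ∩ D) :=
    fun t ht => ⟨mul_pos hu.1 ht.1, hD (mul_le_of_le_one_left (le_of_lt ht.1) hu.2) ht.2⟩
  refine matrixConvexOn_of_forall_sum_nonneg (ordConnected_Ioi.inter hD.ordConnected).convex
    fun ι _ w p hp hwp => ?_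
  refine sum_mul_antideriv_nonneg hc ?_ hf₀ (fun k => (hp k).1)
    (fun u hu k => hG _ (hscale u hu (hp k))) ?_ ?_ ?_
  · filter_upwards [self_mem_nhdsWithin, nhdsWithin_le_nhds hD₀] with t ht₀ htD
    exact hG t ⟨ht₀, htD⟩
  · have hsum_nonneg := hwp _ (matrixConvexOn_const 1)
    have hsum_nonpos := hwp _ (matrixConvexOn_const (-1))
    simp only [mul_one, mul_neg, Finset.sum_neg_distrib] at hsum_nonneg hsum_nonpos
    linarith
  · have hneg_log := hwp _ (matrixConvexOn_neg_log.mono inter_subset_left)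
    simpa only [mul_neg, Finset.sum_neg_distrib, neg_nonneg] using hneg_log
  · exact fun u hu => hwp _ (hf.comp_const_mul (hscale u hu))

/-- Proposition 3.7: if `f : [0,α) → ℝ` is continuous with `f(0) ≤ 0` and matrix convex of
order 2 on `[0,α)`, then any antiderivative `G` of `g(t) = f(t)/t` on `(0,α)` is matrix convex
of order 2 on `(0,α)`. -/
theorem stmt_14 (α : EReal) (hα : 0 < α) (f : ℝ → ℝ)
    (hfc : ContinuousOn f {x : ℝ | 0 ≤ x ∧ (x : EReal) < α})
    (hf0 : f 0 ≤ 0)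
    (hconv : MatrixConvexOn 2 f {x : ℝ | 0 ≤ x ∧ (x : EReal) < α})
    (G : ℝ → ℝ)
    (hG : ∀ t : ℝ, 0 < t → (t : EReal) < α → HasDerivAt G (f t / t) t) :
    MatrixConvexOn 2 G {x : ℝ | 0 < x ∧ (x : EReal) < α} := by
  have hD₀ : {x : ℝ | (x : EReal) < α} ∈ nhds 0 :=
    (isOpen_Iio.preimage continuous_coe_real_ereal).mem_nhds hα
  have hsub : Ioi 0 ∩ {x : ℝ | (x : EReal) < α} ⊆ {x : ℝ | 0 ≤ x ∧ (x : EReal) < α} :=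
    inter_subset_inter_left _ Ioi_subset_Ici_self
  exact stmt_14_general ((isLowerSet_Iio α).preimage EReal.coe_strictMono.monotone) hD₀ hf0
    ((continuousWithinAt_inter hD₀).1 ((hfc 0 ⟨le_rfl, hα⟩).mono hsub)) (hconv.mono hsub)
    fun t ht => hG t ht.1 ht.2
end
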